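/- Let X(t), P(t) be differentiable curves of n×r real matrices satisfying for all t the Stiefel constraints XᵀX = I_r, XᵀP + PᵀX = 0 and the Neumann system with the normal metric: Ẋ = P − XPᵀX, Ṗ = −AX + PXᵀP − XPᵀP + XXᵀAX. Then for every real λ such that λI_n − A is invertible, the 2r×2r block matrices L*(λ) = [[−Xᵀ(λI_n−A)⁻¹P, −Xᵀ(λI_n−A)⁻¹X],[I_r + Pᵀ(λI_n−A)⁻¹P, Pᵀ(λI_n−A)⁻¹X]] and A*(λ) = [[XᵀP, I_r],[Λ − λI_r, −PᵀX]] with Λ = XᵀAX − PᵀP satisfy the dual Lax equation d/dt L*(λ) = [L*(λ), A*(λ)]. -/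

import Mathlib

/-!
Put `W = [P X]`, `N = [[0, 0], [1, 0]]` and `S = λI - A`. The equations of motion say exactly that
`Ẇ = W A* + S W N`, and `L* = N + J G` with `G = Wᵀ S⁻¹ W` and `J` the symplectic unit. Since
`S` is symmetric, the resolvent cancels from the terms in `N`, so that
`Ġ = A*ᵀ G + G A* + Nᵀ WᵀW + WᵀW N`. The matrix `A*` is Hamiltonian, `J A*ᵀ = -A* J`, which turns
the first two terms into `[J G, A*]`, and the Stiefel constraints identify the last two,
multiplied by `J`, with `[N, A*]`.
-/

open Matrix

section MatrixCurves

variable {𝕜 : Type*} [NontriviallyNormedField 𝕜] {k l m n : Type*}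

theorem hasDerivAt_matrix_iff [Finite m] [Finite n] {M : 𝕜 → Matrix m n 𝕜} {M' : Matrix m n 𝕜}
    {t : 𝕜} :
    HasDerivAt M M' t ↔ ∀ i j, HasDerivAt (fun s => M s i j) (M' i j) t := by
  have := Fintype.ofFinite m
  have := Fintype.ofFinite n
  exact hasDerivAt_pi.trans (forall_congr' fun _ => hasDerivAt_pi)

theorem hasDerivAt_matrix_const [Finite m] [Finite n] (C : Matrix m n 𝕜) (t : 𝕜) :
    HasDerivAt (fun _ => C) 0 t :=
  hasDerivAt_matrix_iff.2 fun i j => hasDerivAt_const t (C i j)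

theorem hasDerivAt_matrix_const_add [Finite m] [Finite n] (C : Matrix m n 𝕜)
    {M : 𝕜 → Matrix m n 𝕜} {M' : Matrix m n 𝕜} {t : 𝕜} (hM : HasDerivAt M M' t) :
    HasDerivAt (fun s => C + M s) M' t :=
  hasDerivAt_matrix_iff.2 fun i j => (hasDerivAt_matrix_iff.1 hM i j).const_add (C i j)

theorem hasDerivAt_matrix_mul [Finite l] [Fintype m] [Finite n] {M : 𝕜 → Matrix l m 𝕜}
    {M' : Matrix l m 𝕜} {N : 𝕜 → Matrix m n 𝕜} {N' : Matrix m n 𝕜} {t : 𝕜}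
    (hM : HasDerivAt M M' t) (hN : HasDerivAt N N' t) :
    HasDerivAt (fun s => M s * N s) (M' * N t + M t * N') t := by
  rw [hasDerivAt_matrix_iff] at *
  intro i j
  simp only [mul_apply, Matrix.add_apply, ← Finset.sum_add_distrib]
  exact HasDerivAt.fun_sum fun x _ => (hM i x).mul (hN x j)

theorem hasDerivAt_matrix_transpose [Finite m] [Finite n] {M : 𝕜 → Matrix m n 𝕜}
    {M' : Matrix m n 𝕜} {t : 𝕜} (hM : HasDerivAt M M' t) :
    HasDerivAt (fun s => (M s)ᵀ) M'ᵀ t :=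
  hasDerivAt_matrix_iff.2 fun i j => hasDerivAt_matrix_iff.1 hM j i

theorem hasDerivAt_matrix_fromCols [Finite k] [Finite m] [Finite n] {M : 𝕜 → Matrix k m 𝕜}
    {M' : Matrix k m 𝕜} {N : 𝕜 → Matrix k n 𝕜} {N' : Matrix k n 𝕜} {t : 𝕜}
    (hM : HasDerivAt M M' t) (hN : HasDerivAt N N' t) :
    HasDerivAt (fun s => fromCols (M s) (N s)) (fromCols M' N') t :=
  hasDerivAt_matrix_iff.2 fun i j => j.casesOn (hasDerivAt_matrix_iff.1 hM i)
    (hasDerivAt_matrix_iff.1 hN i)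

theorem hasDerivAt_transpose_mul_mul [Fintype m] [Finite n] (R : Matrix m m 𝕜)
    {W : 𝕜 → Matrix m n 𝕜} {W' : Matrix m n 𝕜} {t : 𝕜} (hW : HasDerivAt W W' t) :
    HasDerivAt (fun s => (W s)ᵀ * R * W s) (W'ᵀ * R * W t + (W t)ᵀ * R * W') t := by
  simpa only [Matrix.mul_zero, add_zero] using
    hasDerivAt_matrix_mul
      (hasDerivAt_matrix_mul (hasDerivAt_matrix_transpose hW) (hasDerivAt_matrix_const R t)) hW

end MatrixCurves

section Algebra

variable {α : Type*} [CommRing α] {m n : Type*} [Fintype m] [Fintype n] [DecidableEq m]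

theorem transpose_mul_inv_mul_add_of_isSymm {S : Matrix m m α} (hS : S.IsSymm) (hu : IsUnit S)
    (W : Matrix m n α) (B N : Matrix n n α) :
    (W * B + S * W * N)ᵀ * S⁻¹ * W + Wᵀ * S⁻¹ * (W * B + S * W * N) =
      Bᵀ * (Wᵀ * S⁻¹ * W) + Wᵀ * S⁻¹ * W * B + (Nᵀ * (Wᵀ * W) + Wᵀ * W * N) := by
  have hdet : IsUnit S.det := (isUnit_iff_isUnit_det S).1 hu
  have hleft : (S * W * N)ᵀ * S⁻¹ * W = Nᵀ * (Wᵀ * W) := by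
    simp only [transpose_mul, hS.eq, Matrix.mul_assoc, mul_nonsing_inv_cancel_left S _ hdet]
  have hright : Wᵀ * S⁻¹ * (S * W * N) = Wᵀ * W * N := by
    simp only [Matrix.mul_assoc, nonsing_inv_mul_cancel_left S _ hdet]
  rw [transpose_add, Matrix.add_mul, Matrix.add_mul, Matrix.mul_add, hleft, hright, transpose_mul]
  simp only [Matrix.mul_assoc]
  abel

theorem lie_add_mul_eq {R : Type*} [Ring R] {j b b' c q : R} (hb : j * b' = -(b * j))
    (hc : ⁅c, b⁆ = j * q) (g : R) : ⁅c + j * g, b⁆ = j * (b' * g + g * b + q) := by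
  have hbg : b * (j * g) = -(j * (b' * g)) := by
    rw [← mul_assoc, ← mul_assoc, hb, neg_mul, neg_neg]
  rw [Ring.lie_def] at hc ⊢
  rw [add_mul, mul_add b, hbg, mul_add, mul_add, ← hc, mul_assoc]
  abel

theorem J_mul_transpose_fromBlocks {B C : Matrix m m α} (hB : B.IsSymm) (hC : C.IsSymm)
    (D : Matrix m m α) :
    J m α * (fromBlocks D B C (-Dᵀ))ᵀ = -(fromBlocks D B C (-Dᵀ) * J m α) := by
  simp [J, fromBlocks_transpose, fromBlocks_multiply, fromBlocks_neg, hB.eq, hC.eq]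

end Algebra

section DualLax

variable {n r α : Type*} [Fintype n] [DecidableEq r] [CommRing α]

/-- The matrix `L*(λ)` of the dual Lax pair at the point `(X, P)` of the cotangent bundle of the
Stiefel variety. It is meaningful only where `λI - A` is invertible. -/
noncomputable def dualLaxL [DecidableEq n] (A : Matrix n n α) (lam : α) (X P : Matrix n r α) :
    Matrix (r ⊕ r) (r ⊕ r) α :=
  fromBlocks
    (-(Xᵀ * (lam • 1 - A)⁻¹ * P)) (-(Xᵀ * (lam • 1 - A)⁻¹ * X))
    (1 + Pᵀ * (lam • 1 - A)⁻¹ * P) (Pᵀ * (lam • 1 - A)⁻¹ * X)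

/-- The matrix `A*(λ)` of the dual Lax pair at the point `(X, P)` of the cotangent bundle of the
Stiefel variety, with `Λ = XᵀAX - PᵀP` written out. -/
def dualLaxA (A : Matrix n n α) (lam : α) (X P : Matrix n r α) : Matrix (r ⊕ r) (r ⊕ r) α :=
  fromBlocks (Xᵀ * P) 1 ((Xᵀ * A * X - Pᵀ * P) - lam • 1) (-(Pᵀ * X))

/-- The nilpotent matrix `N` by which `L*(λ)` differs from `J` times the Gram matrix of `[P X]`
with respect to the resolvent of `A`. -/
def dualLaxN (r α : Type*) [DecidableEq r] [Zero α] [One α] : Matrix (r ⊕ r) (r ⊕ r) α :=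
  fromBlocks 0 0 1 0

variable [Fintype r]

theorem dualLaxL_eq [DecidableEq n] (A : Matrix n n α) (lam : α) (X P : Matrix n r α) :
    dualLaxL A lam X P =
      dualLaxN r α + J r α * ((fromCols P X)ᵀ * (lam • 1 - A)⁻¹ * fromCols P X) := by
  simp [dualLaxL, dualLaxN, J, transpose_fromCols, fromRows_mul, fromBlocks_multiply,
    fromBlocks_add]

theorem J_mul_transpose_dualLaxA {A : Matrix n n α} (hA : A.IsSymm) (lam : α)
    (X P : Matrix n r α) :
    J r α * (dualLaxA A lam X P)ᵀ = -(dualLaxA A lam X P * J r α) := by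
  have hXAX : (Xᵀ * A * X).IsSymm := by
    rw [IsSymm, transpose_mul, transpose_mul, transpose_transpose, hA.eq, Matrix.mul_assoc]
  have hPP : (Pᵀ * P).IsSymm := by rw [IsSymm, transpose_mul, transpose_transpose]
  have hJ := J_mul_transpose_fromBlocks isSymm_one
    ((hXAX.sub hPP).sub (isSymm_one.smul lam)) (Xᵀ * P)
  rwa [transpose_mul, transpose_transpose] at hJ

theorem fromCols_neumann_eq [DecidableEq n] (A : Matrix n n α) (lam : α) (X P : Matrix n r α) :
    fromCols (-(A * X) + P * Xᵀ * P - X * Pᵀ * P + X * Xᵀ * A * X) (P - X * Pᵀ * X) =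
      fromCols P X * dualLaxA A lam X P + (lam • 1 - A) * fromCols P X * dualLaxN r α := by
  have hP : -(A * X) + P * Xᵀ * P - X * Pᵀ * P + X * Xᵀ * A * X =
      P * (Xᵀ * P) + X * (Xᵀ * A * X - Pᵀ * P - lam • 1) + (lam • 1 - A) * X := by
    simp only [Matrix.mul_sub, Matrix.sub_mul, Matrix.mul_smul, Matrix.smul_mul, Matrix.mul_one,
      Matrix.one_mul, Matrix.mul_assoc]
    abel
  have hX : P - X * Pᵀ * X = P * (1 : Matrix r r α) + X * -(Pᵀ * X) := by
    rw [Matrix.mul_one, Matrix.mul_neg, Matrix.mul_assoc, sub_eq_add_neg]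
  rw [hP, hX, dualLaxA, dualLaxN, fromCols_mul_fromBlocks, mul_fromCols, fromCols_mul_fromBlocks]
  ext i (j | j) <;> simp

theorem lie_dualLaxN_dualLaxA (A : Matrix n n α) (lam : α) {X P : Matrix n r α}
    (hXX : Xᵀ * X = 1) (hXP : Xᵀ * P + Pᵀ * X = 0) :
    ⁅dualLaxN r α, dualLaxA A lam X P⁆ =
      J r α * ((dualLaxN r α)ᵀ * ((fromCols P X)ᵀ * fromCols P X) +
        (fromCols P X)ᵀ * fromCols P X * dualLaxN r α) := by
  have hPX : Pᵀ * X = -(Xᵀ * P) := eq_neg_of_add_eq_zero_right hXP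
  simp [Ring.lie_def, dualLaxN, dualLaxA, J, transpose_fromCols, fromBlocks_transpose,
    fromBlocks_multiply, fromBlocks_add, sub_eq_add_neg, fromBlocks_neg, hXX, hPX]

end DualLax

theorem neumann_normal_dual_lax_general {𝕜 : Type*} [NontriviallyNormedField 𝕜] {n r : Type*}
    [Fintype n] [DecidableEq n] [Fintype r] [DecidableEq r] {A : Matrix n n 𝕜} (hA : A.IsSymm)
    {X P : 𝕜 → Matrix n r 𝕜} {t : 𝕜}
    (hXX : (X t)ᵀ * X t = 1) (hXP : (X t)ᵀ * P t + (P t)ᵀ * X t = 0)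
    (hX : HasDerivAt X (P t - X t * (P t)ᵀ * X t) t)
    (hP : HasDerivAt P (-(A * X t) + P t * (X t)ᵀ * P t - X t * (P t)ᵀ * P t
      + X t * (X t)ᵀ * A * X t) t)
    {lam : 𝕜} (hlam : IsUnit (lam • (1 : Matrix n n 𝕜) - A)) :
    HasDerivAt (fun s => dualLaxL A lam (X s) (P s))
      ⁅dualLaxL A lam (X t) (P t), dualLaxA A lam (X t) (P t)⁆ t := by
  have hS : (lam • (1 : Matrix n n 𝕜) - A).IsSymm := (isSymm_one.smul lam).sub hA
  have hG := hasDerivAt_transpose_mul_mul (lam • 1 - A)⁻¹ (hasDerivAt_matrix_fromCols hP hX)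
  rw [fromCols_neumann_eq A lam, transpose_mul_inv_mul_add_of_isSymm hS hlam] at hG
  have hL := hasDerivAt_matrix_const_add (dualLaxN r 𝕜)
    (hasDerivAt_matrix_mul (hasDerivAt_matrix_const (J r 𝕜) t) hG)
  simp only [← dualLaxL_eq] at hL
  convert hL using 1
  rw [dualLaxL_eq, Matrix.zero_mul, zero_add]
  exact lie_add_mul_eq (J_mul_transpose_dualLaxA hA lam (X t) (P t))
    (lie_dualLaxN_dualLaxA A lam hXX hXP) _

/-- The Neumann system with the normal metric on the Stiefel variety
implies the dual 2r×2r Lax equation d/dt L*(λ) = [L*(λ), A*(λ)]. -/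
theorem neumann_normal_dual_lax {n r : ℕ} (a : Fin n → ℝ)
    (A : Matrix (Fin n) (Fin n) ℝ) (hA : A = Matrix.diagonal a)
    (X P : ℝ → Matrix (Fin n) (Fin r) ℝ)
    (hc1 : ∀ t, (X t)ᵀ * X t = 1)
    (hc2 : ∀ t, (X t)ᵀ * P t + (P t)ᵀ * X t = 0)
    (hX : ∀ t i j, HasDerivAt (fun s => X s i j)
      ((P t - X t * (P t)ᵀ * X t) i j) t)
    (hP : ∀ t i j, HasDerivAt (fun s => P s i j)
      ((-(A * X t) + P t * (X t)ᵀ * P t - X t * (P t)ᵀ * P t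
        + X t * (X t)ᵀ * A * X t) i j) t)
    (lam : ℝ)
    (h1 : IsUnit (lam • (1 : Matrix (Fin n) (Fin n) ℝ) - A))
    (Lstar Astar : ℝ → Matrix (Fin r ⊕ Fin r) (Fin r ⊕ Fin r) ℝ)
    (hL : ∀ t, Lstar t = Matrix.fromBlocks
      (-((X t)ᵀ * (lam • 1 - A)⁻¹ * P t)) (-((X t)ᵀ * (lam • 1 - A)⁻¹ * X t))
      (1 + (P t)ᵀ * (lam • 1 - A)⁻¹ * P t) ((P t)ᵀ * (lam • 1 - A)⁻¹ * X t))
    (hAst : ∀ t, Astar t = Matrix.fromBlocks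
      ((X t)ᵀ * P t) 1
      (((X t)ᵀ * A * X t - (P t)ᵀ * P t) - lam • 1) (-((P t)ᵀ * X t))) :
    ∀ t i j, HasDerivAt (fun s => Lstar s i j)
      ((Lstar t * Astar t - Astar t * Lstar t) i j) t := by
  obtain rfl := funext hL
  obtain rfl := funext hAst
  exact fun t => hasDerivAt_matrix_iff.1 <| neumann_normal_dual_lax_general
    (hA ▸ isSymm_diagonal a) (hc1 t) (hc2 t) (hasDerivAt_matrix_iff.2 (hX t))
    (hasDerivAt_matrix_iff.2 (hP t)) h1
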